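/- Let K be a field and n ≥ 3 an integer, and let ℓ0 ≥ 2 be an integer. Then there exist infinitely many monomial ideals in R = K[x_1,…,x_n] whose strong persistence index equals ℓ0; that is, the set of monomial ideals I ⊂ R such that ℓ0 is the smallest positive integer with (I^{ℓ+1} :_R I) = I^{ℓ} for all ℓ ≥ ℓ0 is infinite. -/

import Mathlib

open MvPolynomial

/-- A monomial ideal: an ideal generated by monomials. -/
def IsMonomialIdeal {K : Type*} [Field K] {n : ℕ} (I : Ideal (MvPolynomial (Fin n) K)) : Prop :=
  ∃ S : Set (Fin n →₀ ℕ), I = Ideal.span ((fun d => monomial d (1 : K)) '' S)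

/-- `l` is the strong persistence index of `I`: `l` is the smallest positive integer such that
`(I^(k+1) : I) = I^k` for all `k ≥ l`. -/
def IsStrongPersistenceIndex {R : Type*} [CommRing R] (I : Ideal R) (l : ℕ) : Prop :=
  0 < l ∧ (∀ k, l ≤ k → (I ^ (k + 1)).colon I = I ^ k) ∧
    ∀ l', 0 < l' → (∀ k, l' ≤ k → (I ^ (k + 1)).colon I = I ^ k) → l ≤ l'

/-!
If `J ≤ Q` are ideals with `Q ^ (k + 1) : J = Q ^ k` for all `k`, then `J ^ (k + 1) : J = J ^ k`
holds once `J ^ k = Q ^ k` from `k` on, and fails at the last `k` for which the two powers differ.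
So the strong persistence index of `J` is the point from which on `J ^ k = Q ^ k`.

Take `J = (x ^ m, y ^ m) * 𝔪 ^ t` and `Q = 𝔪 ^ (m + t)`, where `𝔪 = (x, y)`. If `m ≤ t * k + 1`,
every monomial occurring in `𝔪 ^ (m + t * k)` is divisible by `x ^ m` or `y ^ m`, and stripping off
such factors gives `J ^ k = Q ^ k`. Otherwise `x ^ (m - 1) * y ^ (m * (k - 1) + t * k + 1)` is in
`Q ^ k` but not in `(x ^ m, y ^ m) ^ k`. For `m = l * t + 1` the threshold is `l ≤ k`, so the index
is `l`, and varying `t` gives infinitely many ideals.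
-/

section Ideals

theorem pow_add_mul_pow_le {R : Type*} [CommSemiring R] (I J : Ideal R) (m a b : ℕ) :
    I ^ (m + a) * J ^ b ≤ (I ^ m ⊔ J ^ m) * (I ⊔ J) ^ (a + b) := by
  rw [pow_add, mul_assoc, pow_add (I ⊔ J)]
  gcongr
  exacts [le_sup_left, le_sup_left, le_sup_right]

theorem sup_pow_sup_pow_mul_sup_pow {R : Type*} [CommSemiring R] (I J : Ideal R) {m s : ℕ}
    (h : m ≤ s + 1) : (I ^ m ⊔ J ^ m) * (I ⊔ J) ^ s = (I ⊔ J) ^ (m + s) := by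
  refine le_antisymm ?_ ?_
  · rw [pow_add]
    exact Ideal.mul_mono_left
      (sup_le (Ideal.pow_right_mono le_sup_left m) (Ideal.pow_right_mono le_sup_right m))
  · nth_rw 1 [← Ideal.add_eq_sup]
    rw [add_pow, Ideal.sum_eq_sup]
    refine Finset.sup_le fun a ha => Ideal.mul_le_left.trans ?_
    obtain ⟨b, hab⟩ := Nat.exists_eq_add_of_le (Finset.mem_range_succ_iff.1 ha)
    rw [hab, Nat.add_sub_cancel_left]
    have hmab : m ≤ a ∨ m ≤ b := by omega
    rcases hmab with hma | hmb
    · obtain ⟨a, rfl⟩ := Nat.exists_eq_add_of_le hma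
      obtain rfl : s = a + b := by omega
      exact pow_add_mul_pow_le I J m a b
    · obtain ⟨b, rfl⟩ := Nat.exists_eq_add_of_le hmb
      obtain rfl : s = b + a := by omega
      rw [mul_comm, sup_comm (I ^ m), sup_comm I]
      exact pow_add_mul_pow_le J I m b a

theorem sup_pow_sup_pow_pow_mul_sup_pow {R : Type*} [CommSemiring R] (I J : Ideal R) {m s : ℕ}
    (h : m ≤ s + 1) (k : ℕ) : (I ^ m ⊔ J ^ m) ^ k * (I ⊔ J) ^ s = (I ⊔ J) ^ (m * k + s) := by
  induction k with
  | zero => simp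
  | succ k ih =>
    rw [pow_succ', mul_assoc, ih, sup_pow_sup_pow_mul_sup_pow I J (by omega)]
    congr 1
    ring

variable {R : Type*} [CommRing R] {J Q : Ideal R}

theorem pow_le_colon_pow_succ (h : J ≤ Q) (k : ℕ) : Q ^ k ≤ (Q ^ (k + 1)).colon J := by
  intro f hf
  rw [Submodule.mem_colon]
  intro g hg
  rw [smul_eq_mul, pow_succ]
  exact Ideal.mul_mem_mul hf (h hg)

theorem isStrongPersistenceIndex_of_pow_eq_pow_iff {l : ℕ} (hl : 0 < l)
    (hcolon : ∀ k, (Q ^ (k + 1)).colon J = Q ^ k)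
    (hpow : ∀ k, 0 < k → (J ^ k = Q ^ k ↔ l ≤ k)) : IsStrongPersistenceIndex J l := by
  refine ⟨hl, fun k hk => ?_, fun l' hl' h => ?_⟩
  · rw [(hpow k (by omega)).2 hk, (hpow (k + 1) k.succ_pos).2 (by omega), hcolon]
  · by_contra! hlt
    obtain ⟨k, rfl⟩ : ∃ k, l = k + 1 := ⟨l - 1, by omega⟩
    have hk : J ^ k = Q ^ k := by
      rw [← h k (by omega), (hpow (k + 1) k.succ_pos).2 le_rfl, hcolon]
    have := (hpow k (by omega)).1 hk
    omega

end Ideals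

section MonomialIdeals

variable {σ : Type*} (R : Type*) [CommSemiring R]

/-- The monomial ideal of `R[x_i : i ∈ σ]` generated by the monomials with exponents in `S`. It is
the ideal that occurs in `IsMonomialIdeal`, over any coefficients and in any set of variables. -/
noncomputable def monomialIdeal (S : Set (σ →₀ ℕ)) : Ideal (MvPolynomial σ R) :=
  Ideal.span ((fun d => monomial d (1 : R)) '' S)

theorem monomialIdeal_univ : monomialIdeal R (Set.univ : Set (σ →₀ ℕ)) = ⊤ :=
  (Ideal.eq_top_iff_one _).2 (Ideal.subset_span ⟨0, trivial, rfl⟩)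

open scoped Pointwise in
theorem monomialIdeal_add (S T : Set (σ →₀ ℕ)) :
    monomialIdeal R (S + T) = monomialIdeal R S * monomialIdeal R T := by
  rw [monomialIdeal, monomialIdeal, monomialIdeal, Ideal.span_mul_span', ← Set.image2_add,
    ← Set.image2_mul, Set.image_image2, Set.image2_image_left, Set.image2_image_right]
  simp only [monomial_mul, one_mul]

variable {R}

theorem mem_monomialIdeal_iff_of_isUpperSet {S : Set (σ →₀ ℕ)} (hS : IsUpperSet S)
    {f : MvPolynomial σ R} : f ∈ monomialIdeal R S ↔ ∀ d ∈ f.support, d ∈ S := by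
  rw [monomialIdeal, mem_ideal_span_monomial_image]
  exact forall₂_congr fun d _ => ⟨fun ⟨_, he, hle⟩ => hS hle he, fun hd => ⟨d, hd, le_rfl⟩⟩

end MonomialIdeals

section VarPowIdeals

variable {σ : Type*} {s : Finset σ} {m : ℕ}

theorem sum_add_single_div {i : σ} (hi : i ∈ s) (hm : 0 < m) (d : σ →₀ ℕ) :
    ∑ j ∈ s, (d + Finsupp.single i m) j / m = ∑ j ∈ s, d j / m + 1 := by
  classical
  have hdiv (j : σ) : (d + Finsupp.single i m) j / m = d j / m + if i = j then 1 else 0 := by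
    rcases eq_or_ne i j with rfl | hij
    · simp [Nat.add_div_right _ hm]
    · simp [hij]
  simp only [hdiv, Finset.sum_add_distrib, Finset.sum_ite_eq, if_pos hi]

theorem isUpperSet_le_sum_div (s : Finset σ) (m k : ℕ) :
    IsUpperSet {d : σ →₀ ℕ | k ≤ ∑ j ∈ s, d j / m} := fun _ _ hde hd =>
  hd.trans (Finset.sum_le_sum fun j _ => Nat.div_le_div_right (hde j))

open scoped Pointwise in
theorem setOf_le_sum_div_add_image_single (hm : 0 < m) (k : ℕ) :
    {d : σ →₀ ℕ | k ≤ ∑ j ∈ s, d j / m} + (fun i => Finsupp.single i m) '' (s : Set σ) =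
      {d | k + 1 ≤ ∑ j ∈ s, d j / m} := by
  ext d
  constructor
  · rintro ⟨e, he, _, ⟨i, hi, rfl⟩, rfl⟩
    simpa only [Set.mem_ofPred_eq, sum_add_single_div hi hm, add_le_add_iff_right] using he
  · intro hd
    obtain ⟨i, hi, hdi⟩ : ∃ i ∈ s, d i / m ≠ 0 :=
      Finset.exists_ne_zero_of_sum_ne_zero (Nat.ne_zero_of_lt hd)
    have hle : Finsupp.single i m ≤ d := by
      rw [Finsupp.single_le_iff]
      exact (Nat.div_ne_zero_iff.1 hdi).2
    refine ⟨d - Finsupp.single i m, ?_, _, ⟨i, hi, rfl⟩, tsub_add_cancel_of_le hle⟩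
    rwa [Set.mem_ofPred_eq, ← tsub_add_cancel_of_le hle, sum_add_single_div hi hm,
      add_le_add_iff_right] at hd

variable (R : Type*) [CommSemiring R]

/-- The ideal generated by the `m`-th powers of the variables in `s`; for `m = 1` it is the ideal
`𝔪` of the variables in `s`. -/
noncomputable def varPowIdeal (s : Finset σ) (m : ℕ) : Ideal (MvPolynomial σ R) :=
  Ideal.span ((fun i => X i ^ m) '' (s : Set σ))

variable {R}

theorem X_pow_mem_varPowIdeal {i : σ} (hi : i ∈ s) (m : ℕ) :
    (X i ^ m : MvPolynomial σ R) ∈ varPowIdeal R s m :=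
  Ideal.subset_span ⟨i, hi, rfl⟩

theorem varPowIdeal_eq_monomialIdeal (s : Finset σ) (m : ℕ) :
    varPowIdeal R s m = monomialIdeal R ((fun i => Finsupp.single i m) '' (s : Set σ)) := by
  simp only [varPowIdeal, monomialIdeal, Set.image_image, X_pow_eq_monomial]

theorem varPowIdeal_pow_eq_monomialIdeal (hm : 0 < m) (k : ℕ) :
    varPowIdeal R s m ^ k = monomialIdeal R {d | k ≤ ∑ j ∈ s, d j / m} := by
  induction k with
  | zero => simp [monomialIdeal_univ]
  | succ k ih =>
    rw [pow_succ, ih, varPowIdeal_eq_monomialIdeal, ← monomialIdeal_add,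
      setOf_le_sum_div_add_image_single hm]

theorem mem_varPowIdeal_pow_iff (hm : 0 < m) {k : ℕ} {f : MvPolynomial σ R} :
    f ∈ varPowIdeal R s m ^ k ↔ ∀ d ∈ f.support, k ≤ ∑ j ∈ s, d j / m := by
  rw [varPowIdeal_pow_eq_monomialIdeal hm,
    mem_monomialIdeal_iff_of_isUpperSet (isUpperSet_le_sum_div s m k)]
  rfl

theorem monomial_mem_varPowIdeal_pow_iff [Nontrivial R] (hm : 0 < m) {k : ℕ} {d : σ →₀ ℕ} :
    monomial d (1 : R) ∈ varPowIdeal R s m ^ k ↔ k ≤ ∑ j ∈ s, d j / m := by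
  classical
  simp [mem_varPowIdeal_pow_iff hm, support_monomial]

theorem mem_varPowIdeal_one_pow_of_mul_X_pow_mem {i : σ} (hi : i ∈ s) {a b : ℕ}
    {f : MvPolynomial σ R} (h : f * X i ^ b ∈ varPowIdeal R s 1 ^ (a + b)) :
    f ∈ varPowIdeal R s 1 ^ a := by
  classical
  rw [mem_varPowIdeal_pow_iff one_pos] at h ⊢
  intro d hd
  have hdb : d + Finsupp.single i b ∈ (f * X i ^ b).support := by
    rwa [X_pow_eq_monomial, mem_support_iff, coeff_mul_monomial, mul_one, ← mem_support_iff]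
  simpa [Finset.sum_add_distrib, Finsupp.single_apply, hi] using h _ hdb

theorem varPowIdeal_le_pow (s : Finset σ) (m : ℕ) : varPowIdeal R s m ≤ varPowIdeal R s 1 ^ m := by
  rw [varPowIdeal, Ideal.span_le]
  rintro _ ⟨i, hi, rfl⟩
  simpa using Ideal.pow_mem_pow (X_pow_mem_varPowIdeal (R := R) hi 1) m

theorem varPowIdeal_pair [DecidableEq σ] (i j : σ) (m : ℕ) :
    varPowIdeal R {i, j} m = Ideal.span {X i} ^ m ⊔ Ideal.span {X j} ^ m := by
  rw [varPowIdeal, Finset.coe_pair, Set.image_pair, Ideal.span_insert, Ideal.span_singleton_pow,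
    Ideal.span_singleton_pow]

end VarPowIdeals

section GapIdeals

variable {σ : Type*} {s : Finset σ} {m t : ℕ}

/-- The ideal `(x_i ^ m : i ∈ s) * 𝔪 ^ t`, where `𝔪 = (x_i : i ∈ s)`. It is generated in degree
`m + t` and contains all `x_i ^ (m + t)` but, when `t` is small compared to `m`, low powers of it
miss some monomials of `𝔪 ^ (m + t)`. -/
noncomputable def gapIdeal (R : Type*) [CommSemiring R] (s : Finset σ) (m t : ℕ) :
    Ideal (MvPolynomial σ R) :=
  varPowIdeal R s m * varPowIdeal R s 1 ^ t

section CommSemiring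

variable {R : Type*} [CommSemiring R]

theorem exists_gapIdeal_eq_monomialIdeal (s : Finset σ) (m t : ℕ) :
    ∃ S, gapIdeal R s m t = monomialIdeal R S :=
  ⟨_, by rw [gapIdeal, varPowIdeal_pow_eq_monomialIdeal one_pos, varPowIdeal_eq_monomialIdeal,
    ← monomialIdeal_add]⟩

theorem gapIdeal_le (s : Finset σ) (m t : ℕ) : gapIdeal R s m t ≤ varPowIdeal R s 1 ^ (m + t) := by
  rw [gapIdeal, pow_add]
  exact Ideal.mul_mono_left (varPowIdeal_le_pow s m)

theorem X_pow_mem_gapIdeal {i : σ} (hi : i ∈ s) (m t : ℕ) :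
    (X i ^ (m + t) : MvPolynomial σ R) ∈ gapIdeal R s m t := by
  rw [gapIdeal, pow_add]
  refine Ideal.mul_mem_mul (X_pow_mem_varPowIdeal hi m) (Ideal.pow_mem_pow ?_ t)
  simpa using X_pow_mem_varPowIdeal (R := R) hi 1

theorem add_le_add_of_gapIdeal_le [Nontrivial R] (hs : s.Nonempty) {m' t' : ℕ}
    (h : gapIdeal R s m t ≤ gapIdeal R s m' t') : m' + t' ≤ m + t := by
  classical
  obtain ⟨i, hi⟩ := hs
  have hX := gapIdeal_le s m' t' (h (X_pow_mem_gapIdeal hi m t))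
  rw [X_pow_eq_monomial, monomial_mem_varPowIdeal_pow_iff one_pos] at hX
  simpa [Finsupp.single_apply, hi, -Finsupp.single_add] using hX

theorem not_pow_le_gapIdeal_pair_pow [DecidableEq σ] [Nontrivial R] {i j : σ} (hij : i ≠ j)
    {a k : ℕ} (h : t * (k + 1) < a) :
    ¬ varPowIdeal R {i, j} 1 ^ ((a + 1 + t) * (k + 1)) ≤ gapIdeal R {i, j} (a + 1) t ^ (k + 1) := by
  intro hle
  let d := Finsupp.single i a + Finsupp.single j ((a + 1) * k + (t * (k + 1) + 1))
  have hdi : d i = a := by simp [d, hij]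
  have hdj : d j = (a + 1) * k + (t * (k + 1) + 1) := by simp [d, hij.symm]
  have hmem : monomial d (1 : R) ∈ varPowIdeal R {i, j} 1 ^ ((a + 1 + t) * (k + 1)) := by
    rw [monomial_mem_varPowIdeal_pow_iff one_pos, Finset.sum_pair hij, hdi, hdj, Nat.div_one,
      Nat.div_one]
    linarith
  have hgap : monomial d (1 : R) ∈ varPowIdeal R {i, j} (a + 1) ^ (k + 1) := by
    have := hle hmem
    rw [gapIdeal, mul_pow] at this
    exact Ideal.mul_le_left this
  rw [monomial_mem_varPowIdeal_pow_iff a.succ_pos, Finset.sum_pair hij, hdi, hdj,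
    Nat.div_eq_of_lt a.lt_succ_self, Nat.mul_add_div a.succ_pos,
    Nat.div_eq_of_lt (Nat.succ_lt_succ h)] at hgap
  omega

theorem gapIdeal_pair_pow_eq_iff [DecidableEq σ] [Nontrivial R] {i j : σ} (hij : i ≠ j)
    {k : ℕ} (hk : 0 < k) :
    gapIdeal R {i, j} m t ^ k = (varPowIdeal R {i, j} 1 ^ (m + t)) ^ k ↔ m ≤ t * k + 1 := by
  constructor
  · intro h
    by_contra! hlt
    obtain ⟨a, rfl⟩ : ∃ a, m = a + 1 := ⟨m - 1, by omega⟩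
    obtain ⟨k, rfl⟩ : ∃ k', k = k' + 1 := ⟨k - 1, by omega⟩
    rw [← pow_mul] at h
    exact not_pow_le_gapIdeal_pair_pow hij (by omega) h.ge
  · intro h
    rw [gapIdeal, mul_pow, ← pow_mul, ← pow_mul, add_mul, varPowIdeal_pair, varPowIdeal_pair,
      pow_one, pow_one]
    exact sup_pow_sup_pow_pow_mul_sup_pow _ _ h k

end CommSemiring

variable {R : Type*} [CommRing R]

theorem colon_gapIdeal (hs : s.Nonempty) (m t k : ℕ) :
    ((varPowIdeal R s 1 ^ (m + t)) ^ (k + 1)).colon (gapIdeal R s m t) =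
      (varPowIdeal R s 1 ^ (m + t)) ^ k := by
  refine le_antisymm (fun f hf => ?_) (pow_le_colon_pow_succ (gapIdeal_le s m t) k)
  obtain ⟨i, hi⟩ := hs
  have hX := Submodule.mem_colon.1 hf _ (X_pow_mem_gapIdeal hi m t)
  rw [← pow_mul] at hX ⊢
  exact mem_varPowIdeal_one_pow_of_mul_X_pow_mem hi hX

theorem isStrongPersistenceIndex_gapIdeal [DecidableEq σ] [Nontrivial R] {i j : σ} (hij : i ≠ j)
    {l : ℕ} (hl : 0 < l) (ht : 0 < t) :
    IsStrongPersistenceIndex (gapIdeal R {i, j} (l * t + 1) t) l := by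
  refine isStrongPersistenceIndex_of_pow_eq_pow_iff hl
    (colon_gapIdeal (Finset.insert_nonempty i {j}) _ t) fun k hk => ?_
  rw [gapIdeal_pair_pow_eq_iff hij hk, add_le_add_iff_right, mul_comm l,
    Nat.mul_le_mul_left_iff ht]

end GapIdeals

theorem stmt_9_general {σ R : Type*} [Nontrivial σ] [CommRing R] [Nontrivial R] {l : ℕ}
    (hl : 0 < l) :
    {I : Ideal (MvPolynomial σ R) |
      (∃ S, I = monomialIdeal R S) ∧ IsStrongPersistenceIndex I l}.Infinite := by
  classical
  obtain ⟨i, j, hij⟩ := exists_pair_ne σ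
  let J (u : ℕ) : Ideal (MvPolynomial σ R) := gapIdeal R {i, j} (l * (u + 1) + 1) (u + 1)
  have hmono {u v : ℕ} (h : J u ≤ J v) : v ≤ u := by
    have hdeg := add_le_add_of_gapIdeal_le (Finset.insert_nonempty i {j}) h
    by_contra! huv
    have := Nat.mul_le_mul_left l huv.le
    linarith
  have hinj : Function.Injective J := fun u v h => le_antisymm (hmono h.ge) (hmono h.le)
  exact Set.infinite_of_injective_forall_mem hinj fun u =>
    ⟨exists_gapIdeal_eq_monomialIdeal _ _ _, isStrongPersistenceIndex_gapIdeal hij hl u.succ_pos⟩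

theorem stmt_9 {K : Type*} [Field K] (n : ℕ) (hn : 3 ≤ n) (l0 : ℕ) (hl0 : 2 ≤ l0) :
    {I : Ideal (MvPolynomial (Fin n) K) |
      IsMonomialIdeal I ∧ IsStrongPersistenceIndex I l0}.Infinite := by
  have : Nontrivial (Fin n) := Fin.nontrivial_iff_two_le.2 (by omega)
  exact stmt_9_general (by omega)
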